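/- Let r ≥ 1 and 1 ≤ k ≤ r. Let b be an increasing map from the nonempty subsets of {1,…,r} to (0,∞) with b(J) = |J| for |J| ≤ k. For each m ≥ 1 let a_m map the nonempty subsets of {1,…,r} to (0,∞) with a_m(J) = 1 for |J| ≤ k, and assume (a_m) converges pointwise to a map a with values in (0,∞). Let (s_m) be a sequence in (0,1) with s_m → 0. Then there exist a strictly increasing map φ : ℕ → ℕ and a copula c of order k on [0,1]^r such that for every n ≥ 1 and every nonempty J ⊆ {1,…,r}: c({u ∈ [0,1]^r : u_i ≤ s_{φ(n)} for all i ∈ J}) = a_{φ(n)}(J)·(s_{φ(n)})^{b(J)}. -/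

import Mathlib

open MeasureTheory Filter
open scoped ENNReal BigOperators

noncomputable section

/-- The unit cube `[0,1]^r`. -/
def cube (r : ℕ) : Set (Fin r → ℝ) := Set.univ.pi fun _ => Set.Icc (0:ℝ) 1

/-- A Borel probability measure on `[0,1]^r` is a copula of order `k` if its pushforward
under the coordinate projection to any `k`-element set `J` of coordinates is the Lebesgue
measure on `[0,1]^J`. -/
def IsCopulaOfOrder (r k : ℕ) (c : Measure (Fin r → ℝ)) : Prop :=
  IsProbabilityMeasure c ∧ c (cube r) = 1 ∧
    ∀ J : Finset (Fin r), J.card = k →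
      c.map (fun v (i : J) => v i.1) =
        Measure.pi fun _ : J => volume.restrict (Set.Icc (0:ℝ) 1)

/-- `liminf_{s→0+} c_J(s) / s^τ` (in `ℝ≥0∞`), where
`c_J(s) = c {u ∈ [0,1]^r : u_i ≤ s ∀ i ∈ J}`. -/
def tailLiminf (r : ℕ) (c : Measure (Fin r → ℝ)) (J : Finset (Fin r)) (τ : ℝ) : ℝ≥0∞ :=
  Filter.liminf (fun s : ℝ => c ({v | ∀ i ∈ J, v i ≤ s} ∩ cube r) / ENNReal.ofReal (s ^ τ))
    (nhdsWithin 0 (Set.Ioi 0))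

/-- The tail degree `td_J(c)`: the infimum of the exponents `τ ≥ 0` with
`liminf_{s→0+} c_J(s)/s^τ = ∞` (equal to `∞` if there is no such exponent). -/
def tailDeg (r : ℕ) (c : Measure (Fin r → ℝ)) (J : Finset (Fin r)) : ℝ≥0∞ :=
  sInf {τ : ℝ≥0∞ | tailLiminf r c J τ.toReal = ⊤}

/-- The tail coefficient `tc_J(c) = liminf_{s→0+} c_J(s)/s^{td_J(c)}`. -/
def tailCoef (r : ℕ) (c : Measure (Fin r → ℝ)) (J : Finset (Fin r)) : ℝ≥0∞ :=
  tailLiminf r c J (tailDeg r c J).toReal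

/-!
A point of the unit cube is drawn in two stages. Along a subsequence, the numbers
`1 > s (φ 0) > s (φ 1) > ⋯` cut `(0,1]` into cells; first the vector `L` of cell indices (levels) is
drawn, then the point is uniform in its product of cells. The event that `u i ≤ s (φ n)` for all
`i ∈ J` only depends on the levels, so it suffices to prescribe the law of `L`.

Its survival function at `L` is the desired tail value at the set of coordinates where `L` is
maximal, times the grid points of the other coordinates. Since `b` is strictly increasing, a
subsequence decreasing fast enough makes this function drop by a factor at least `r + 1` whenever
one coordinate of `L` is raised. The leading term then dominates every mixed difference, so the
function is the survival function of a law on `ℕ ^ r`. On at most `k` coordinates the prescribed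
values are products of grid points, so the levels there are independent and the point is uniform.
-/

section Telescoping

variable {u : ℕ → ℝ}

lemma tsum_ofReal_sub_succ (hu : Antitone u) (hlim : Tendsto u atTop (nhds 0)) :
    ∑' j, ENNReal.ofReal (u j - u (j + 1)) = ENNReal.ofReal (u 0) := by
  have hnonneg : ∀ j, 0 ≤ u j - u (j + 1) := fun j => sub_nonneg.2 (hu j.le_succ)
  have hsum : HasSum (fun j => u j - u (j + 1)) (u 0) := by
    rw [hasSum_iff_tendsto_nat_of_nonneg hnonneg]
    simpa only [Finset.sum_range_sub', sub_zero] using hlim.const_sub (u 0)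
  rw [← ENNReal.ofReal_tsum_of_nonneg hnonneg hsum.summable, hsum.tsum_eq]

lemma tsum_indicator_Ici_ofReal_sub_succ (hu : Antitone u) (hlim : Tendsto u atTop (nhds 0))
    (n : ℕ) :
    ∑' j, (Set.Ici n).indicator (fun j => ENNReal.ofReal (u j - u (j + 1))) j
      = ENNReal.ofReal (u n) := by
  have hsupp : Function.support ((Set.Ici n).indicator
      fun j => ENNReal.ofReal (u j - u (j + 1))) ⊆ Set.range (n + ·) := by
    intro j hj
    exact ⟨j - n, Nat.add_sub_cancel' (Set.mem_of_indicator_ne_zero hj)⟩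
  rw [← (add_right_injective n).tsum_eq hsupp]
  have hshift : Antitone fun j => u (n + j) := fun i j hij => hu (Nat.add_le_add_left hij n)
  have hshift_lim : Tendsto (fun j => u (n + j)) atTop (nhds 0) := by
    simpa only [add_comm n] using (tendsto_add_atTop_iff_nat n).2 hlim
  simpa [add_assoc] using tsum_ofReal_sub_succ hshift hshift_lim

end Telescoping

section OrthantMeasure

lemma tendsto_zero_of_mul_succ_le {u : ℕ → ℝ} {q : ℝ} (hq : 1 < q) (hu : ∀ n, 0 ≤ u n)
    (hstep : ∀ n, q * u (n + 1) ≤ u n) : Tendsto u atTop (nhds 0) := by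
  have hq0 : 0 < q := one_pos.trans hq
  have hgeom : ∀ n, u n ≤ u 0 * q⁻¹ ^ n := by
    intro n
    induction n with
    | zero => simp
    | succ n ih =>
      calc u (n + 1) ≤ q⁻¹ * u n := (le_inv_mul_iff₀ hq0).2 (hstep n)
        _ ≤ q⁻¹ * (u 0 * q⁻¹ ^ n) := by gcongr
        _ = u 0 * q⁻¹ ^ (n + 1) := by ring
  refine squeeze_zero hu hgeom ?_
  simpa using (tendsto_pow_atTop_nhds_zero_of_lt_one (inv_nonneg.2 hq0.le)
    (inv_lt_one_of_one_lt₀ hq)).const_mul (u 0)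

lemma mul_sub_le_sub {c x x' y y' : ℝ} (hc : 0 ≤ c) (hx : (c + 1) * x ≤ x')
    (hy : (c + 1) * y ≤ x') (hy' : 0 ≤ y') : c * (x - y') ≤ x' - y := by
  have hx' : c * ((c + 1) * x) ≤ c * x' := mul_le_mul_of_nonneg_left hx hc
  have : c * x + y ≤ x' := by
    refine le_of_mul_le_mul_left ?_ (by positivity : 0 < c + 1)
    linarith
  linarith [mul_nonneg hc hy']

lemma sum_map_cons_Ici {r : ℕ} (P : ℕ → Measure (Fin r → ℕ)) (l : Fin (r + 1) → ℕ) :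
    Measure.sum (fun a => (P a).map (Fin.cons a)) (Set.Ici l)
      = ∑' a, (Set.Ici (l 0)).indicator (fun a => P a (Set.Ici (Fin.tail l))) a := by
  have hmeas : MeasurableSet (Set.Ici l) := (Set.to_countable _).measurableSet
  rw [Measure.sum_apply _ hmeas]
  refine tsum_congr fun a => ?_
  have hpreimage : (Fin.cons (α := fun _ => ℕ) a) ⁻¹' Set.Ici l
      = if l 0 ≤ a then Set.Ici (Fin.tail l) else ∅ := by
    ext L
    split_ifs with ha <;> simp [Fin.le_cons, ha]
  rw [Measure.map_apply .of_discrete hmeas, hpreimage]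
  split_ifs with ha <;> simp [ha]

/-- The slices `S (a, ·) - S (a + 1, ·)` prescribe the laws of the last `r` coordinates when the
first one is `a`. Forming a difference costs one unit of the decay ratio, so ratio `r + 2` in
dimension `r + 1` leaves ratio `r + 1` for the slices. -/
lemma exists_measure_Ici_eq {r : ℕ} {S : (Fin r → ℕ) → ℝ} (hS : ∀ L, 0 ≤ S L)
    (hstep : ∀ L i, ((r : ℝ) + 1) * S (Function.update L i (L i + 1)) ≤ S L) :
    ∃ P : Measure (Fin r → ℕ), ∀ l, P (Set.Ici l) = ENNReal.ofReal (S l) := by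
  induction r with
  | zero =>
    refine ⟨ENNReal.ofReal (S 0) • Measure.dirac 0, fun l => ?_⟩
    simp [Subsingleton.elim l 0]
  | succ r ih =>
    push_cast at hstep
    have hhead : ∀ a L, ((r : ℝ) + 1 + 1) * S (Fin.cons (a + 1) L) ≤ S (Fin.cons a L) := by
      intro a L
      simpa using hstep (Fin.cons a L) 0
    have htail : ∀ a L i, ((r : ℝ) + 1 + 1) * S (Fin.cons a (Function.update L i (L i + 1)))
        ≤ S (Fin.cons a L) := by
      intro a L i
      simpa using hstep (Fin.cons a L) i.succ
    have hanti : ∀ L, Antitone fun a => S (Fin.cons a L) := fun L =>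
      antitone_nat_of_succ_le fun a =>
        (le_mul_of_one_le_left (hS _) (by linarith [r.cast_nonneg (α := ℝ)])).trans (hhead a L)
    have hlim : ∀ L, Tendsto (fun a => S (Fin.cons a L)) atTop (nhds 0) := fun L =>
      tendsto_zero_of_mul_succ_le (by linarith [r.cast_nonneg (α := ℝ)]) (fun _ => hS _)
        fun a => hhead a L
    have hslice : ∀ a : ℕ, ∃ P : Measure (Fin r → ℕ), ∀ l,
        P (Set.Ici l) = ENNReal.ofReal (S (Fin.cons a l) - S (Fin.cons (a + 1) l)) := fun a =>
      ih (fun L => sub_nonneg.2 (hanti L a.le_succ)) fun L i =>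
        mul_sub_le_sub (by positivity) (htail a L i) (hhead a L) (hS _)
    choose P hP using hslice
    refine ⟨Measure.sum fun a => (P a).map (Fin.cons a), fun l => ?_⟩
    simp only [sum_map_cons_Ici, hP]
    rw [tsum_indicator_Ici_ofReal_sub_succ (hanti (Fin.tail l)) (hlim (Fin.tail l)),
      Fin.cons_self_tail]

lemma eq_pi_of_Ici {ι : Type*} [Fintype ι] {P : Measure (ι → ℕ)} {μ : ι → Measure ℕ}
    [∀ i, IsFiniteMeasure (μ i)]
    (h : ∀ l : ι → ℕ, P (Set.Ici l) = ∏ i, μ i (Set.Ici (l i))) : P = Measure.pi μ := by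
  refine (Measure.pi_eq_generateFrom (C := fun _ => Set.range Set.Ici) (fun _ => ?_) (fun _ => ?_)
    (fun _ => ?_) fun s hs => ?_).symm
  · exact (borel_eq_generateFrom_Ici ℕ).symm.trans BorelSpace.measurable_eq.symm
  · rw [← Set.image_univ]
    exact isPiSystem_image_Ici _
  · exact ⟨fun _ => Set.Ici 0, fun _ => ⟨0, rfl⟩, fun _ => measure_lt_top _ _, by ext; simp⟩
  · choose l hl using hs
    obtain rfl : (fun i => Set.Ici (l i)) = s := funext hl
    rw [Set.pi_univ_Ici, h]

end OrthantMeasure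

/-- A sequence `1 = t 0 > t 1 > ⋯` tending to `0`. It cuts `(0,1]` into the cells
`(t (j + 1), t j]`; a point of the `j`-th cell has level `j`. -/
structure IsGrid (t : ℕ → ℝ) : Prop where
  strictAnti : StrictAnti t
  zero : t 0 = 1
  tendsto_zero : Tendsto t atTop (nhds 0)

/-- The uniform law on the unit interval, as a measure on `ℝ`. The half-open interval is the one
cut into cells by a grid. -/
def unitUniform : Measure ℝ := volume.restrict (Set.Ioc 0 1)

instance : IsProbabilityMeasure unitUniform := ⟨by simp [unitUniform]⟩

/-- The law of the level of a uniform point with respect to the grid `t`. -/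
def levelLaw (t : ℕ → ℝ) : Measure ℕ :=
  Measure.sum fun j => ENNReal.ofReal (t j - t (j + 1)) • Measure.dirac j

/-- The affine parametrization of the `j`-th cell `(t (j + 1), t j]` by `x ∈ (0,1]`. -/
def cellPoint (t : ℕ → ℝ) (j : ℕ) (x : ℝ) : ℝ := (t j - t (j + 1)) * x + t (j + 1)

lemma ofReal_smul_map_unitUniform {a : ℝ} (ha : 0 < a) (b : ℝ) :
    ENNReal.ofReal a • unitUniform.map (fun x => a * x + b)
      = volume.restrict (Set.Ioc b (a + b)) := by
  have hemb : MeasurableEmbedding fun x : ℝ => a * x + b :=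
    (measurableEmbedding_addRight b).comp (measurableEmbedding_mulLeft₀ ha.ne')
  have hvol : ENNReal.ofReal a • (volume : Measure ℝ).map (fun x => a * x + b) = volume := by
    have hcomp : (fun x : ℝ => a * x + b) = (· + b) ∘ (a * ·) := rfl
    have hscale := Real.smul_map_volume_mul_left ha.ne'
    rw [abs_of_pos ha] at hscale
    rw [hcomp, ← Measure.map_map (measurable_add_const b) (measurable_const_mul a),
      ← Measure.map_smul, hscale, map_add_right_eq_self]
  have himage : (fun x : ℝ => a * x + b) '' Set.Ioc 0 1 = Set.Ioc b (a + b) := by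
    simpa using Set.image_affine_Ioc ha b 0 1
  calc ENNReal.ofReal a • unitUniform.map (fun x => a * x + b)
      = ENNReal.ofReal a • (volume.map (fun x => a * x + b)).restrict (Set.Ioc b (a + b)) := by
        rw [hemb.restrict_map, ← himage, hemb.injective.preimage_image, unitUniform]
    _ = volume.restrict (Set.Ioc b (a + b)) := by rw [← Measure.restrict_smul, hvol]

lemma measurable_cellPoint (t : ℕ → ℝ) : Measurable fun p : ℕ × ℝ => cellPoint t p.1 p.2 := by
  refine measurable_from_prod_countable_right fun j => ?_
  unfold cellPoint
  fun_prop

lemma measurable_pi_cellPoint {ι : Type*} (t : ℕ → ℝ) :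
    Measurable fun (p : (ι → ℕ) × (ι → ℝ)) i => cellPoint t (p.1 i) (p.2 i) :=
  measurable_pi_lambda _ fun i => (measurable_cellPoint t).comp
    (by fun_prop : Measurable fun p : (ι → ℕ) × (ι → ℝ) => (p.1 i, p.2 i))

lemma volume_restrict_Icc_eq_unitUniform :
    (volume : Measure ℝ).restrict (Set.Icc 0 1) = unitUniform :=
  restrict_Ioc_eq_restrict_Icc.symm

namespace IsGrid

variable {t : ℕ → ℝ} (ht : IsGrid t)

include ht

lemma antitone : Antitone t := ht.strictAnti.antitone

lemma pos (n : ℕ) : 0 < t n :=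
  (ht.antitone.le_of_tendsto ht.tendsto_zero (n + 1)).trans_lt (ht.strictAnti n.lt_succ_self)

lemma le_one (n : ℕ) : t n ≤ 1 := ht.zero ▸ ht.antitone n.zero_le

lemma iUnion_Ioc_succ : ⋃ j, Set.Ioc (t (j + 1)) (t j) = Set.Ioc 0 1 := by
  ext x
  simp only [Set.mem_iUnion, Set.mem_Ioc]
  constructor
  · rintro ⟨j, hjx, hxj⟩
    exact ⟨(ht.pos _).trans hjx, hxj.trans (ht.le_one j)⟩
  rintro ⟨hx0, hx1⟩
  have hex : ∃ m, t m < x := (ht.tendsto_zero.eventually_lt_const hx0).exists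
  have hfind : Nat.find hex ≠ 0 := fun h =>
    (ht.zero ▸ h ▸ Nat.find_spec hex : 1 < x).not_ge hx1
  obtain ⟨j, hj⟩ := Nat.exists_eq_succ_of_ne_zero hfind
  have hspec := Nat.find_spec hex
  rw [hj] at hspec
  exact ⟨j, hspec, not_lt.1 (Nat.find_min hex (by lia))⟩

lemma sum_restrict_Ioc_succ :
    Measure.sum (fun j => volume.restrict (Set.Ioc (t (j + 1)) (t j))) = unitUniform := by
  rw [unitUniform, ← ht.iUnion_Ioc_succ]
  exact (Measure.restrict_iUnion ht.antitone.pairwise_disjoint_on_Ioc_succ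
    fun _ => measurableSet_Ioc).symm

lemma levelLaw_Ici (n : ℕ) : levelLaw t (Set.Ici n) = ENNReal.ofReal (t n) := by
  rw [levelLaw, Measure.sum_apply _ measurableSet_Ici,
    ← tsum_indicator_Ici_ofReal_sub_succ ht.antitone ht.tendsto_zero]
  refine tsum_congr fun j => ?_
  by_cases hj : n ≤ j <;> simp [hj]

lemma isProbabilityMeasure_levelLaw : IsProbabilityMeasure (levelLaw t) :=
  ⟨by simpa [ht.zero] using ht.levelLaw_Ici 0⟩

lemma map_cellPoint_levelLaw_prod :
    ((levelLaw t).prod unitUniform).map (fun p => cellPoint t p.1 p.2) = unitUniform := by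
  have hcell : ∀ j, ((ENNReal.ofReal (t j - t (j + 1)) • Measure.dirac j).prod unitUniform).map
      (fun p => cellPoint t p.1 p.2) = volume.restrict (Set.Ioc (t (j + 1)) (t j)) := by
    intro j
    rw [Measure.prod_smul_left, Measure.map_smul, Measure.dirac_prod,
      Measure.map_map (measurable_cellPoint t) measurable_prodMk_left]
    simpa [Function.comp_def, cellPoint] using
      ofReal_smul_map_unitUniform (sub_pos.2 (ht.strictAnti j.lt_succ_self)) (t (j + 1))
  rw [levelLaw, Measure.prod_sum_left, Measure.map_sum (measurable_cellPoint t).aemeasurable]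
  simp only [hcell, ht.sum_restrict_Ioc_succ]

lemma cellPoint_mem_Ioc (j : ℕ) {x : ℝ} (hx : x ∈ Set.Ioc (0 : ℝ) 1) :
    cellPoint t j x ∈ Set.Ioc (t (j + 1)) (t j) := by
  have hj : 0 < t j - t (j + 1) := sub_pos.2 (ht.strictAnti j.lt_succ_self)
  have himage := Set.image_affine_Ioc hj (t (j + 1)) 0 1
  simp only [mul_zero, zero_add, mul_one, sub_add_cancel] at himage
  exact himage ▸ Set.mem_image_of_mem _ hx

lemma cellPoint_le_iff (n j : ℕ) {x : ℝ} (hx : x ∈ Set.Ioc (0 : ℝ) 1) :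
    cellPoint t j x ≤ t n ↔ n ≤ j := by
  obtain ⟨hlt, hle⟩ := ht.cellPoint_mem_Ioc j hx
  refine ⟨fun h => ?_, fun h => hle.trans (ht.antitone h)⟩
  exact Nat.lt_succ_iff.1 (ht.strictAnti.lt_iff_gt.1 (hlt.trans_le h))

lemma cellPoint_mem_Icc (j : ℕ) {x : ℝ} (hx : x ∈ Set.Ioc (0 : ℝ) 1) :
    cellPoint t j x ∈ Set.Icc (0 : ℝ) 1 := by
  obtain ⟨hlt, hle⟩ := ht.cellPoint_mem_Ioc j hx
  exact ⟨((ht.pos _).trans hlt).le, hle.trans (ht.le_one j)⟩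

end IsGrid

section Spread

variable {ι : Type*} [Fintype ι]

/-- The law of a random point of the unit cube whose vector of levels with respect to the grid `t`
has law `P`, and which is uniform in its product of cells given these levels. -/
def spread (t : ℕ → ℝ) (P : Measure (ι → ℕ)) : Measure (ι → ℝ) :=
  (P.prod (Measure.pi fun _ => unitUniform)).map fun p i => cellPoint t (p.1 i) (p.2 i)

instance (t : ℕ → ℝ) (P : Measure (ι → ℕ)) [IsProbabilityMeasure P] :
    IsProbabilityMeasure (spread t P) :=
  Measure.isProbabilityMeasure_map (measurable_pi_cellPoint t).aemeasurable

lemma ae_forall_mem_Ioc_pi_unitUniform :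
    ∀ᵐ x ∂(Measure.pi fun _ : ι => unitUniform), ∀ i, x i ∈ Set.Ioc (0 : ℝ) 1 := by
  refine ae_all_iff.2 fun i => ?_
  exact (measurePreserving_eval (fun _ : ι => unitUniform) i).quasiMeasurePreserving.ae
    (ae_restrict_mem measurableSet_Ioc)

lemma map_restrict_spread (t : ℕ → ℝ) (P : Measure (ι → ℕ)) [SFinite P] (J : Finset ι) :
    (spread t P).map J.restrict = spread t (P.map J.restrict) := by
  have hpi : (Measure.pi fun _ : ι => unitUniform).map J.restrict
      = Measure.pi fun _ : J => unitUniform := by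
    rw [← Measure.infinitePi_eq_pi]
    exact Measure.infinitePi_map_restrict _
  rw [spread, spread, ← hpi, Measure.map_prod_map _ _ (by fun_prop) (by fun_prop),
    Measure.map_map (by fun_prop) (measurable_pi_cellPoint t),
    Measure.map_map (measurable_pi_cellPoint t) (by fun_prop)]
  rfl

namespace IsGrid

variable {t : ℕ → ℝ} (ht : IsGrid t)

include ht

lemma spread_pi_levelLaw :
    spread t (Measure.pi fun _ : ι => levelLaw t) = Measure.pi fun _ => unitUniform := by
  have := ht.isProbabilityMeasure_levelLaw
  have hcell : MeasurePreserving (fun p : ℕ × ℝ => cellPoint t p.1 p.2)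
      ((levelLaw t).prod unitUniform) unitUniform :=
    ⟨measurable_cellPoint t, ht.map_cellPoint_levelLaw_prod⟩
  rw [spread, ← (measurePreserving_arrowProdEquivProdArrow ℕ ℝ ι (fun _ => levelLaw t)
    fun _ => unitUniform).map_eq,
    Measure.map_map (measurable_pi_cellPoint t) (MeasurableEquiv.measurable _)]
  exact (measurePreserving_pi _ _ fun _ => hcell).map_eq

lemma spread_apply_setOf_le_inter_Icc (P : Measure (ι → ℕ)) [SFinite P] (J : Finset ι) (n : ℕ) :
    spread t P ({v | ∀ i ∈ J, v i ≤ t n} ∩ Set.univ.pi fun _ => Set.Icc 0 1)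
      = P {L | ∀ i ∈ J, n ≤ L i} := by
  have hmeas : MeasurableSet ({v : ι → ℝ | ∀ i ∈ J, v i ≤ t n}
      ∩ Set.univ.pi fun _ => Set.Icc 0 1) := by
    measurability
  have hfst : P {L | ∀ i ∈ J, n ≤ L i} = P.prod (Measure.pi fun _ : ι => unitUniform)
      ({L | ∀ i ∈ J, n ≤ L i} ×ˢ Set.univ) := by
    rw [Measure.prod_prod, measure_univ, mul_one]
  rw [spread, Measure.map_apply (measurable_pi_cellPoint t) hmeas, hfst]
  refine measure_congr (eventuallyEq_set.2 ?_)
  filter_upwards [Measure.quasiMeasurePreserving_snd.ae ae_forall_mem_Ioc_pi_unitUniform]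
    with p hp
  have hcube : (fun i => cellPoint t (p.1 i) (p.2 i)) ∈ Set.univ.pi fun _ => Set.Icc (0 : ℝ) 1 :=
    fun i _ => ht.cellPoint_mem_Icc _ (hp i)
  simp only [Set.mem_preimage, Set.mem_inter_iff, hcube, Set.mem_prod, Set.mem_univ, and_true,
    Set.mem_ofPred_eq, ht.cellPoint_le_iff n _ (hp _)]

end IsGrid

end Spread

section Survival

lemma prod_erase_update {ι : Type*} [DecidableEq ι] (t : ℕ → ℝ) (s : Finset ι) (L : ι → ℕ)
    (i : ι) (n : ℕ) :
    ∏ j ∈ s.erase i, t (Function.update L i n j) = ∏ j ∈ s.erase i, t (L j) :=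
  Finset.prod_congr rfl fun j hj => by rw [Function.update_of_ne (Finset.ne_of_mem_erase hj)]

variable {ι : Type*} [Fintype ι]

/-- The maximum of a level vector, `0` for the empty vector. -/
def topLevel (L : ι → ℕ) : ℕ := Finset.univ.sup L

/-- The coordinates at which a level vector is maximal. -/
def topSet (L : ι → ℕ) : Finset ι := {i | L i = topLevel L}

@[simp] lemma mem_topSet {L : ι → ℕ} {i : ι} : i ∈ topSet L ↔ L i = topLevel L := by
  simp [topSet]

lemma le_topLevel (L : ι → ℕ) (i : ι) : L i ≤ topLevel L := Finset.le_sup (Finset.mem_univ i)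

lemma topLevel_eq {L : ι → ℕ} {M : ℕ} {i : ι} (hi : L i = M) (hle : ∀ j, L j ≤ M) :
    topLevel L = M :=
  le_antisymm (Finset.sup_le fun j _ => hle j) (hi ▸ le_topLevel L i)

lemma topSet_nonempty [Nonempty ι] (L : ι → ℕ) : (topSet L).Nonempty := by
  obtain ⟨i, -, hi⟩ := Finset.exists_mem_eq_sup Finset.univ Finset.univ_nonempty L
  exact ⟨i, mem_topSet.2 hi.symm⟩

variable [DecidableEq ι] {L : ι → ℕ} {i : ι}

lemma topLevel_update_of_mem (hi : i ∈ topSet L) :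
    topLevel (Function.update L i (L i + 1)) = topLevel L + 1 := by
  rw [mem_topSet] at hi
  refine topLevel_eq (i := i) (by simp [hi]) fun j => ?_
  rcases eq_or_ne j i with rfl | hj
  · simp [hi]
  · simpa [hj] using (le_topLevel L j).trans (Nat.le_succ _)

lemma topSet_update_of_mem (hi : i ∈ topSet L) :
    topSet (Function.update L i (L i + 1)) = {i} := by
  ext j
  rw [mem_topSet, topLevel_update_of_mem hi, Finset.mem_singleton]
  rcases eq_or_ne j i with rfl | hj
  · simpa using hi
  · simpa [hj] using ((le_topLevel L j).trans_lt (Nat.lt_succ_self _)).ne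

lemma topLevel_update_of_notMem (hi : i ∉ topSet L) :
    topLevel (Function.update L i (L i + 1)) = topLevel L := by
  have : Nonempty ι := ⟨i⟩
  obtain ⟨j, hj⟩ := topSet_nonempty L
  have hji : j ≠ i := fun h => hi (h ▸ hj)
  rw [mem_topSet] at hi hj
  refine topLevel_eq (i := j) (by simp [hji, hj]) fun l => ?_
  rcases eq_or_ne l i with rfl | hl
  · simpa using (le_topLevel L l).lt_of_ne hi
  · simpa [hl] using le_topLevel L l

lemma topSet_update_of_notMem (hi : i ∉ topSet L) :
    topSet (Function.update L i (L i + 1))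
      = if L i + 1 = topLevel L then insert i (topSet L) else topSet L := by
  rw [mem_topSet] at hi
  ext j
  rw [mem_topSet, topLevel_update_of_notMem (by simpa using hi)]
  rcases eq_or_ne j i with rfl | hj <;> split_ifs with h <;> simp_all

/-- The survival function `L ↦ P (Set.Ici L)` prescribed for the law `P` of the level vector: the
value of `α` at the set of coordinates of top level, times the grid points of the other coordinates,
as if these were independent of the rest. -/
def survival (t : ℕ → ℝ) (α : ℕ → Finset ι → ℝ) (L : ι → ℕ) : ℝ :=
  α (topLevel L) (topSet L) * ∏ j ∈ (topSet L)ᶜ, t (L j)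

/-- The grid point `T'` and the prescribed values `A'` at the next level are so small, compared
with `T` and `A` at the current level, that raising one coordinate of a level vector by one divides
its `survival` by at least `q`. -/
structure IsRapidStep (q T : ℝ) (A : Finset ι → ℝ) (T' : ℝ) (A' : Finset ι → ℝ) : Prop where
  mul_lt : q * T' < T
  mul_le_mul_pow : ∀ K, K.Nonempty → q * T' ≤ A K * T ^ Fintype.card ι
  mul_insert_le : ∀ i K, K.Nonempty → i ∉ K → q * A' (insert i K) ≤ T * A' K

/-- Values `α n K` prescribed for the probability that the coordinates in `K` are at most `t n`,
decreasing rapidly with the level `n`. -/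
structure IsRapidTail (q : ℝ) (t : ℕ → ℝ) (α : ℕ → Finset ι → ℝ) : Prop where
  zero : ∀ K, α 0 K = 1
  pos : ∀ n K, K.Nonempty → 0 < α n K
  singleton : ∀ n i, α n {i} = t n
  step : ∀ n, IsRapidStep q (t n) (α n) (t (n + 1)) (α (n + 1))

variable {t : ℕ → ℝ} {α : ℕ → Finset ι → ℝ} {q : ℝ}

lemma IsRapidTail.pos_topSet (hα : IsRapidTail q t α) (L : ι → ℕ) :
    0 < α (topLevel L) (topSet L) := by
  cases isEmpty_or_nonempty ι with
  | inl _ => simp [topLevel, hα.zero]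
  | inr _ => exact hα.pos _ _ (topSet_nonempty L)

lemma survival_pos (ht : IsGrid t) (hα : IsRapidTail q t α) (L : ι → ℕ) : 0 < survival t α L :=
  mul_pos (hα.pos_topSet L) (Finset.prod_pos fun _ _ => ht.pos _)

lemma mul_survival_update_le_of_mem (ht : IsGrid t) (hα : IsRapidTail q t α) (hq : 0 ≤ q)
    (hi : i ∈ topSet L) :
    q * survival t α (Function.update L i (L i + 1)) ≤ survival t α L := by
  have hlower : α (topLevel L) (topSet L) * t (topLevel L) ^ Fintype.card ι ≤ survival t α L := by
    refine mul_le_mul_of_nonneg_left ?_ (hα.pos_topSet L).le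
    calc t (topLevel L) ^ Fintype.card ι
        ≤ t (topLevel L) ^ (topSet L)ᶜ.card :=
          pow_le_pow_of_le_one (ht.pos _).le (ht.le_one _) (Finset.card_le_univ _)
      _ ≤ ∏ j ∈ (topSet L)ᶜ, t (L j) := by
          rw [← Finset.prod_const]
          exact Finset.prod_le_prod (fun _ _ => (ht.pos _).le)
            fun j _ => ht.antitone (le_topLevel L j)
  have hupper : survival t α (Function.update L i (L i + 1)) ≤ t (topLevel L + 1) := by
    rw [survival, topLevel_update_of_mem hi, topSet_update_of_mem hi, hα.singleton]
    exact mul_le_of_le_one_right (ht.pos _).le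
      (Finset.prod_le_one (fun _ _ => (ht.pos _).le) fun _ _ => ht.le_one _)
  calc q * survival t α (Function.update L i (L i + 1)) ≤ q * t (topLevel L + 1) := by gcongr
    _ ≤ α (topLevel L) (topSet L) * t (topLevel L) ^ Fintype.card ι :=
        (hα.step _).mul_le_mul_pow _ ⟨i, hi⟩
    _ ≤ survival t α L := hlower

lemma survival_eq_mul_prod_erase (hi : i ∉ topSet L) :
    survival t α L
      = t (L i) * α (topLevel L) (topSet L) * ∏ j ∈ (topSet L)ᶜ.erase i, t (L j) := by
  rw [survival, ← Finset.mul_prod_erase _ _ (Finset.mem_compl.2 hi)]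
  ring

lemma mul_survival_update_le_of_notMem (ht : IsGrid t) (hα : IsRapidTail q t α)
    (hi : i ∉ topSet L) :
    q * survival t α (Function.update L i (L i + 1)) ≤ survival t α L := by
  have : Nonempty ι := ⟨i⟩
  have hprod : 0 ≤ ∏ j ∈ (topSet L)ᶜ.erase i, t (L j) := Finset.prod_nonneg fun _ _ => (ht.pos _).le
  rw [survival_eq_mul_prod_erase hi]
  by_cases htop : L i + 1 = topLevel L
  · have hinsert := (hα.step (L i)).mul_insert_le i _ (topSet_nonempty L) hi
    rw [htop] at hinsert
    calc q * survival t α (Function.update L i (L i + 1))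
        = q * α (topLevel L) (insert i (topSet L)) * ∏ j ∈ (topSet L)ᶜ.erase i, t (L j) := by
          rw [survival, topLevel_update_of_notMem hi, topSet_update_of_notMem hi, if_pos htop,
            Finset.compl_insert, prod_erase_update, mul_assoc]
      _ ≤ _ := mul_le_mul_of_nonneg_right hinsert hprod
  · have htopSet : topSet (Function.update L i (L i + 1)) = topSet L := by
      rw [topSet_update_of_notMem hi, if_neg htop]
    calc q * survival t α (Function.update L i (L i + 1))
        = q * t (L i + 1) * α (topLevel L) (topSet L)
            * ∏ j ∈ (topSet L)ᶜ.erase i, t (L j) := by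
          rw [survival_eq_mul_prod_erase (htopSet ▸ hi), htopSet, topLevel_update_of_notMem hi,
            prod_erase_update, Function.update_self]
          ring
      _ ≤ _ := mul_le_mul_of_nonneg_right (mul_le_mul_of_nonneg_right
          (hα.step (L i)).mul_lt.le (hα.pos_topSet L).le) hprod

lemma mul_survival_update_le (ht : IsGrid t) (hα : IsRapidTail q t α) (hq : 0 ≤ q)
    (L : ι → ℕ) (i : ι) :
    q * survival t α (Function.update L i (L i + 1)) ≤ survival t α L := by
  by_cases hi : i ∈ topSet L
  · exact mul_survival_update_le_of_mem ht hα hq hi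
  · exact mul_survival_update_le_of_notMem ht hα hi

lemma survival_of_topLevel_eq_zero (ht : t 0 = 1) (hα : ∀ K, α 0 K = 1) (hL : topLevel L = 0) :
    survival t α L = 1 := by
  have hL0 : ∀ j, L j = 0 := fun j => Nat.le_zero.1 (hL ▸ le_topLevel L j)
  simp [survival, hL, hα, hL0, ht]

lemma survival_indicator (ht : t 0 = 1) (hα : ∀ K, α 0 K = 1) {J : Finset ι} (hJ : J.Nonempty)
    (n : ℕ) : survival t α (fun i => if i ∈ J then n else 0) = α n J := by
  obtain ⟨j, hj⟩ := hJ
  have hlevel : topLevel (fun i => if i ∈ J then n else 0) = n :=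
    topLevel_eq (i := j) (by simp [hj]) fun i => by split_ifs <;> simp
  rcases eq_or_ne n 0 with rfl | hn
  · rw [survival_of_topLevel_eq_zero ht hα hlevel, hα]
  · have htopSet : topSet (fun i => if i ∈ J then n else 0) = J := by
      ext i
      simp [hlevel, hn.symm]
    rw [survival, hlevel, htopSet, Finset.prod_eq_one, mul_one]
    intro i hi
    rw [if_neg (Finset.mem_compl.1 hi), ht]

lemma survival_eq_prod (ht : t 0 = 1) (hα : ∀ K, α 0 K = 1) {J : Finset ι}
    (hαJ : ∀ n, ∀ K ⊆ J, K.Nonempty → α n K = t n ^ K.card) (hL : ∀ i ∉ J, L i = 0) :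
    survival t α L = ∏ i, t (L i) := by
  by_cases hlevel : topLevel L = 0
  · have hL0 : ∀ j, L j = 0 := fun j => Nat.le_zero.1 (hlevel ▸ le_topLevel L j)
    simp [survival_of_topLevel_eq_zero ht hα hlevel, hL0, ht]
  · have hsub : topSet L ⊆ J := fun i hi => by
      by_contra hiJ
      exact hlevel (mem_topSet.1 hi ▸ hL i hiJ)
    have : Nonempty ι := not_isEmpty_iff.1 fun _ => hlevel (by simp [topLevel])
    have hprod : ∏ i ∈ topSet L, t (L i) = t (topLevel L) ^ (topSet L).card :=
      Finset.prod_eq_pow_card fun i hi => by rw [mem_topSet.1 hi]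
    rw [survival, hαJ _ _ hsub (topSet_nonempty L), ← hprod, Finset.prod_mul_prod_compl]

end Survival

section Copula

lemma IsGrid.isCopulaOfOrder_spread {r k : ℕ} {t : ℕ → ℝ} (ht : IsGrid t)
    {P : Measure (Fin r → ℕ)} [IsProbabilityMeasure P]
    (hP : ∀ J : Finset (Fin r), J.card = k → ∀ l : Fin r → ℕ, (∀ i ∉ J, l i = 0) →
      P (Set.Ici l) = ENNReal.ofReal (∏ i, t (l i))) :
    IsCopulaOfOrder r k (spread t P) := by
  have := ht.isProbabilityMeasure_levelLaw
  refine ⟨inferInstance, ?_, fun J hJ => ?_⟩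
  · simpa [cube] using ht.spread_apply_setOf_le_inter_Icc P ∅ 0
  · have hlevels : P.map J.restrict = Measure.pi fun _ : J => levelLaw t := by
      refine eq_pi_of_Ici fun l => ?_
      have hpreimage : J.restrict ⁻¹' Set.Ici l
          = Set.Ici fun i => if h : i ∈ J then l ⟨i, h⟩ else 0 := by
        ext L
        simp only [Set.mem_preimage, Set.mem_Ici, Pi.le_def, Finset.restrict, Subtype.forall]
        refine forall_congr' fun i => ?_
        by_cases hi : i ∈ J <;> simp [hi]
      rw [Measure.map_apply (by fun_prop) (Set.to_countable _).measurableSet, hpreimage,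
        hP J hJ _ fun i hi => dif_neg hi, ENNReal.ofReal_prod_of_nonneg fun _ _ => (ht.pos _).le,
        ← Finset.prod_subset J.subset_univ fun i _ hi => by simp [hi, ht.zero],
        ← Finset.prod_coe_sort]
      simp [ht.levelLaw_Ici]
    simp only [volume_restrict_Icc_eq_unitUniform]
    rw [← ht.spread_pi_levelLaw, ← hlevels]
    exact map_restrict_spread t P J

lemma IsRapidTail.exists_isCopulaOfOrder {r k : ℕ} {t : ℕ → ℝ} {α : ℕ → Finset (Fin r) → ℝ}
    (ht : IsGrid t) (hα : IsRapidTail ((r : ℝ) + 1) t α)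
    (hαk : ∀ n K, K.Nonempty → K.card ≤ k → α n K = t n ^ K.card) :
    ∃ c : Measure (Fin r → ℝ), IsCopulaOfOrder r k c ∧
      ∀ n (J : Finset (Fin r)), J.Nonempty →
        (c ({v | ∀ i ∈ J, v i ≤ t n} ∩ cube r)).toReal = α n J := by
  obtain ⟨P, hP⟩ := exists_measure_Ici_eq (fun L => (survival_pos ht hα L).le)
    (mul_survival_update_le ht hα (by positivity))
  have hPprob : IsProbabilityMeasure P := by
    constructor
    rw [← Set.Ici_bot, hP,
      survival_of_topLevel_eq_zero ht.zero hα.zero (by simp [topLevel]), ENNReal.ofReal_one]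
  refine ⟨spread t P, ht.isCopulaOfOrder_spread fun J hJ l hl => ?_, fun n J hJ => ?_⟩
  · rw [hP, survival_eq_prod ht.zero hα.zero (J := J) (fun n K hKJ hK =>
      hαk n K hK ((Finset.card_le_card hKJ).trans hJ.le)) hl]
  · have hset : {L : Fin r → ℕ | ∀ i ∈ J, n ≤ L i} = Set.Ici fun i => if i ∈ J then n else 0 := by
      ext L
      refine forall_congr' fun i => ?_
      by_cases hi : i ∈ J <;> simp [hi]
    rw [cube, ht.spread_apply_setOf_le_inter_Icc, hset, hP, survival_indicator ht.zero hα.zero hJ,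
      ENNReal.toReal_ofReal (hα.pos n J hJ).le]

end Copula

section Subsequence

lemma exists_strictMono_forall_rel {p : ℕ → Prop} {R : ℕ → ℕ → Prop} (hp : ∀ᶠ n in atTop, p n)
    (hR : ∀ m, ∀ᶠ n in atTop, R m n) :
    ∃ φ : ℕ → ℕ, StrictMono φ ∧ (∀ n, p (φ n)) ∧ ∀ n, R (φ n) (φ (n + 1)) := by
  obtain ⟨φ, hφ, hrel⟩ := exists_seq_of_forall_finset_exists p (fun m n => m < n ∧ R m n)
    fun s _ => (hp.and <| (eventually_all_finset s).2 fun m _ =>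
      (eventually_gt_atTop m).and (hR m)).exists
  exact ⟨φ, fun m n h => (hrel m n h).1, hφ, fun n => (hrel n _ n.lt_succ_self).2⟩

/-- Extends a sequence by a zeroth term `1`. -/
def prependOne {β : Type*} [One β] (u : ℕ → β) : ℕ → β
  | 0 => 1
  | n + 1 => u n

variable {ι : Type*} [Fintype ι] [DecidableEq ι] {s : ℕ → ℝ} {α : ℕ → Finset ι → ℝ}

lemma eventually_isRapidStep (hs0 : Tendsto s atTop (nhds 0))
    (hα : ∀ m J, J.Nonempty → 0 < α m J)
    (ho : ∀ i J, J.Nonempty → i ∉ J → (fun m => α m (insert i J)) =o[atTop] fun m => α m J)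
    {T : ℝ} {A : Finset ι → ℝ} (hT : 0 < T) (hA : ∀ J, J.Nonempty → 0 < A J) (q : ℝ) :
    ∀ᶠ n in atTop, IsRapidStep q T A (s n) (α n) := by
  have hqs : Tendsto (fun n => q * s n) atTop (nhds 0) := by simpa using hs0.const_mul q
  have hpow : ∀ᶠ n in atTop, ∀ K, K.Nonempty → q * s n ≤ A K * T ^ Fintype.card ι := by
    refine eventually_all.2 fun K => eventually_imp_distrib_left.2 fun hK => ?_
    exact hqs.eventually_le_const (mul_pos (hA K hK) (pow_pos hT _))
  have hinsert : ∀ᶠ n in atTop, ∀ i K, K.Nonempty → i ∉ K →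
      q * α n (insert i K) ≤ T * α n K := by
    refine eventually_all.2 fun i => eventually_all.2 fun K =>
      eventually_imp_distrib_left.2 fun hK => eventually_imp_distrib_left.2 fun hi => ?_
    filter_upwards [((ho i K hK hi).const_mul_left q).bound hT] with n hn
    rw [Real.norm_of_nonneg (hα n K hK).le] at hn
    exact (le_abs_self _).trans hn
  filter_upwards [hqs.eventually_lt_const hT, hpow, hinsert] with n hlt hn hins
    using ⟨hlt, hn, hins⟩

lemma isRapidTail_prependOne {q : ℝ} (hα : ∀ m J, J.Nonempty → 0 < α m J)
    (hsingleton : ∀ m i, α m {i} = s m) (hfirst : IsRapidStep q 1 1 (s 0) (α 0))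
    (hstep : ∀ m, IsRapidStep q (s m) (α m) (s (m + 1)) (α (m + 1))) :
    IsRapidTail q (prependOne s) (prependOne α) where
  zero _ := rfl
  pos
    | 0, _, _ => one_pos
    | m + 1, K, hK => hα m K hK
  singleton
    | 0, _ => rfl
    | m + 1, i => hsingleton m i
  step
    | 0 => hfirst
    | m + 1 => hstep m

lemma isGrid_prependOne (hs : StrictAnti s) (hs1 : s 0 < 1) (hs0 : Tendsto s atTop (nhds 0)) :
    IsGrid (prependOne s) where
  strictAnti := strictAnti_nat_of_succ_lt fun
    | 0 => hs1
    | n + 1 => hs n.lt_succ_self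
  zero := rfl
  tendsto_zero := (tendsto_add_atTop_iff_nat 1).1 hs0

end Subsequence

lemma isLittleO_mul_rpow {s f g : ℕ → ℝ} {x y L M : ℝ} (hxy : x < y) (hs : ∀ m, 0 < s m)
    (hs0 : Tendsto s atTop (nhds 0)) (hf : Tendsto f atTop (nhds L))
    (hg : Tendsto g atTop (nhds M)) (hM : M ≠ 0) :
    (fun m => f m * s m ^ y) =o[atTop] fun m => g m * s m ^ x := by
  have hpow : Tendsto (fun m => s m ^ (y - x)) atTop (nhds 0) := by
    simpa [Real.zero_rpow (sub_pos.2 hxy).ne'] using hs0.rpow_const (.inr (sub_pos.2 hxy).le)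
  have hlittle : (fun m => s m ^ y) =o[atTop] fun m => s m ^ x := by
    refine (Asymptotics.isLittleO_iff_tendsto fun m h =>
      absurd h (Real.rpow_pos_of_pos (hs m) x).ne').2 ?_
    simpa only [← Real.rpow_sub (hs _)] using hpow
  have hg' : (fun _ => (1 : ℝ)) =O[atTop] g :=
    (Asymptotics.isBigO_const_const 1 hM atTop).trans
      ((Asymptotics.isEquivalent_const_iff_tendsto hM).2 hg).isBigO_symm
  exact ((hf.isBigO_one ℝ).trans hg').mul_isLittleO hlittle

theorem stmt_2_general {r k : ℕ} (hk : 1 ≤ k) {s : ℕ → ℝ} {α : ℕ → Finset (Fin r) → ℝ}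
    (hs : ∀ m, 0 < s m) (hs0 : Tendsto s atTop (nhds 0))
    (hα : ∀ m J, J.Nonempty → 0 < α m J)
    (hαk : ∀ m J, J.Nonempty → J.card ≤ k → α m J = s m ^ J.card)
    (ho : ∀ i J, J.Nonempty → i ∉ J → (fun m => α m (insert i J)) =o[atTop] fun m => α m J) :
    ∃ φ : ℕ → ℕ, StrictMono φ ∧
      ∃ c : Measure (Fin r → ℝ), IsCopulaOfOrder r k c ∧
        ∀ n : ℕ, ∀ J : Finset (Fin r), J.Nonempty →
          (c ({v | ∀ i ∈ J, v i ≤ s (φ n)} ∩ cube r)).toReal = α (φ n) J := by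
  obtain ⟨φ, hφ, hfirst, hstep⟩ := exists_strictMono_forall_rel
    (eventually_isRapidStep hs0 hα ho one_pos (A := 1) (fun _ _ => one_pos) ((r : ℝ) + 1))
    fun m => eventually_isRapidStep hs0 hα ho (hs m) (hα m) ((r : ℝ) + 1)
  have hlt : ∀ {T T' : ℝ}, 0 < T' → ((r : ℝ) + 1) * T' < T → T' < T := fun hT' =>
    (le_mul_of_one_le_left hT'.le (by simp)).trans_lt
  have hgrid : IsGrid (prependOne (s ∘ φ)) := isGrid_prependOne
    (strictAnti_nat_of_succ_lt fun n => hlt (hs _) (hstep n).mul_lt)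
    (hlt (hs _) (hfirst 0).mul_lt) (hs0.comp hφ.tendsto_atTop)
  have hsingleton : ∀ m i, α m {i} = s m := fun m i => by
    simpa using hαk m {i} (Finset.singleton_nonempty i) (by simpa using hk)
  have htail : IsRapidTail ((r : ℝ) + 1) (prependOne (s ∘ φ)) (prependOne (α ∘ φ)) :=
    isRapidTail_prependOne (fun _ => hα _) (fun _ => hsingleton _) (hfirst 0) hstep
  obtain ⟨c, hc, hval⟩ := htail.exists_isCopulaOfOrder (k := k) hgrid fun
    | 0, _, _, _ => (one_pow _).symm
    | n + 1, K, hK, hKk => hαk (φ n) K hK hKk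
  exact ⟨φ, hφ, c, hc, fun n => hval (n + 1)⟩

theorem stmt_2 (r k : ℕ) (hr : 1 ≤ r) (hk : 1 ≤ k) (hkr : k ≤ r)
    (b : Finset (Fin r) → ℝ) (a : ℕ → Finset (Fin r) → ℝ) (alim : Finset (Fin r) → ℝ)
    (s : ℕ → ℝ)
    -- `b` maps nonempty subsets to `(0,∞)`, `b(J) = |J|` for `|J| ≤ k`, `b` increasing
    (hb0 : ∀ J : Finset (Fin r), J.Nonempty → 0 < b J)
    (hbk : ∀ J : Finset (Fin r), J.Nonempty → J.card ≤ k → b J = J.card)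
    (hbinc : ∀ J J' : Finset (Fin r), J.Nonempty → J ⊂ J' → b J < b J')
    -- each `a_m` maps nonempty subsets to `(0,∞)` with `a_m(J) = 1` for `|J| ≤ k`
    (ha0 : ∀ m, ∀ J : Finset (Fin r), J.Nonempty → 0 < a m J)
    (hak : ∀ m, ∀ J : Finset (Fin r), J.Nonempty → J.card ≤ k → a m J = 1)
    -- `(a_m)` converges pointwise to `alim`, with values in `(0,∞)`
    (halim0 : ∀ J : Finset (Fin r), J.Nonempty → 0 < alim J)
    (haconv : ∀ J : Finset (Fin r), J.Nonempty →
      Tendsto (fun m => a m J) atTop (nhds (alim J)))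
    -- `(s_m)` is a sequence in `(0,1)` with `s_m → 0`
    (hs : ∀ m, s m ∈ Set.Ioo (0:ℝ) 1) (hs0 : Tendsto s atTop (nhds 0)) :
    ∃ φ : ℕ → ℕ, StrictMono φ ∧
      ∃ c : Measure (Fin r → ℝ), IsCopulaOfOrder r k c ∧
        ∀ n : ℕ, ∀ J : Finset (Fin r), J.Nonempty →
          (c ({v | ∀ i ∈ J, v i ≤ s (φ n)} ∩ cube r)).toReal
            = a (φ n) J * (s (φ n)) ^ (b J) := by
  refine stmt_2_general hk (α := fun m J => a m J * s m ^ b J) (fun m => (hs m).1) hs0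
    (fun m J hJ => mul_pos (ha0 m J hJ) (Real.rpow_pos_of_pos (hs m).1 _))
    (fun m J hJ hJk => by rw [hak m J hJ hJk, hbk J hJ hJk, one_mul, Real.rpow_natCast])
    fun i J hJ hi => ?_
  exact isLittleO_mul_rpow (hbinc J _ hJ (Finset.ssubset_insert hi)) (fun m => (hs m).1) hs0
    (haconv _ (Finset.insert_nonempty i J)) (haconv J hJ) (halim0 J hJ).ne'
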